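/- arXiv:1704.00555 — 7 statements merged into one kernel-verified Lean document; each statement's English description precedes it below -/
import Mathlib

section
/- Let k be a field, V a k-vector space, W a commutative k-algebra, and M a finite-dimensional k-vector space with dim_k M < N for some positive integer N. Let co : V → W ⊗_k M be a k-linear map and let f_1, …, f_N : M → W be k-linear maps. Define φ_i : V → W by φ_i(v) = μ((id_W ⊗ f_i)(co(v))), where μ : W ⊗_k W → W is the multiplication map. Then for every choice of vectors v_1, …, v_N ∈ V, the determinant of the N×N matrix (φ_i(v_j))_{1≤i,j≤N} (with entries in W) is zero. -/
open TensorProduct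

/-- A product of an `N × d` and a `d × N` matrix with `d < N` has determinant zero. -/
theorem det_mul_eq_zero_of_lt_aux {R : Type*} [CommRing R] {d N : ℕ} (h : d < N)
    (A : Matrix (Fin N) (Fin d) R) (B : Matrix (Fin d) (Fin N) R) : (A * B).det = 0 := by
  obtain ⟨e, he⟩ : ∃ e, N = d + (e + 1) := ⟨N - d - 1, by omega⟩
  subst he
  let A' : Matrix (Fin (d + (e + 1))) (Fin (d + (e + 1))) R :=
    Matrix.of fun i l => Fin.addCases (fun a => A i a) (fun _ => 0) l
  let B' : Matrix (Fin (d + (e + 1))) (Fin (d + (e + 1))) R :=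
    Matrix.of fun l j => Fin.addCases (fun a => B a j) (fun _ => 0) l
  have hAB : A * B = A' * B' := by
    ext i j
    simp [A', B', Matrix.mul_apply, Fin.sum_univ_add]
  have hA : A'.det = 0 :=
    Matrix.det_eq_zero_of_column_eq_zero (Fin.natAdd d 0) (fun i => by simp [A'])
  rw [hAB, Matrix.det_mul, hA, zero_mul]

/-- Lemma 5.4 of the paper: if `co : V → W ⊗ M` with `dim M < N`, and each
`φᵢ : V → W` is obtained from `co` by applying `id ⊗ fᵢ` followed by multiplication
in `W`, then the `N × N` determinant `det (φᵢ (vⱼ))` vanishes. -/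
theorem det_eq_zero_of_factors_through_coaction {k : Type*} [Field k]
    {V W M : Type*} [AddCommGroup V] [Module k V]
    [CommRing W] [Algebra k W]
    [AddCommGroup M] [Module k M] [FiniteDimensional k M]
    {N : ℕ} (hN : 0 < N) (hdim : Module.finrank k M < N)
    (co : V →ₗ[k] W ⊗[k] M) (f : Fin N → (M →ₗ[k] W)) (v : Fin N → V) :
    Matrix.det (Matrix.of fun i j : Fin N =>
      (LinearMap.mul' k W)
        ((TensorProduct.map (LinearMap.id : W →ₗ[k] W) (f i)) (co (v j)))) = 0 := by
  let b := Module.finBasis k M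
  have key : ∀ (g : M →ₗ[k] W) (t : W ⊗[k] M),
      (LinearMap.mul' k W) ((TensorProduct.map (LinearMap.id : W →ₗ[k] W) g) t)
        = ∑ a, g (b a) * (Algebra.TensorProduct.basis W b).repr t a := by
    intro g t
    induction t using TensorProduct.induction_on with
    | zero => simp
    | add x y hx hy => simp only [map_add, hx, hy, Finsupp.add_apply, mul_add, Finset.sum_add_distrib]
    | tmul w m =>
      simp only [TensorProduct.map_tmul, LinearMap.id_apply, LinearMap.mul'_apply,
        Algebra.TensorProduct.basis_repr_tmul]
      conv_lhs => rw [← b.sum_repr m]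
      simp only [map_sum, map_smul, Finset.mul_sum]
      refine Finset.sum_congr rfl fun a _ => ?_
      simp [Algebra.smul_def]
      ring
  rw [← det_mul_eq_zero_of_lt_aux hdim (Matrix.of fun i a => f i (b a))
    (Matrix.of fun a j => (Algebra.TensorProduct.basis W b).repr (co (v j)) a)]
  congr 1
  ext i j
  simp only [Matrix.of_apply, Matrix.mul_apply, key]
end

section
/- Let G be a group acting on a group Π by group automorphisms (action written g(p)), and let T ⊆ G be a subgroup such that the only element of Π fixed by every element of T is the identity (i.e., if t(b) = b for all t ∈ T then b = 1). Let c : G → Π be a 1-cocycle such that there exists b ∈ Π with c(t) = b⁻¹·t(b) for all t ∈ T (the restriction of c to T is a coboundary). Then there exists exactly one 1-cocycle c' : G → Π which is cohomologous to c (i.e. c'(g) = a⁻¹·c(g)·g(a) for some a ∈ Π and all g) and satisfies c'(t) = 1 for all t ∈ T. -/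
/-- Lemma 8.1 of the paper (abstract form): if the only element of `Q` fixed by every
element of the subgroup `T ≤ G` is the identity, then every 1-cocycle `c : G → Q`
whose restriction to `T` is a coboundary is cohomologous to exactly one 1-cocycle
which is trivial on `T`. -/
theorem unique_cocycle_representative_trivial_on_T {G Q : Type*} [Group G] [Group Q]
    (φ : G →* MulAut Q) (T : Subgroup G)
    (hfix : ∀ b : Q, (∀ t ∈ T, φ t b = b) → b = 1)
    (c : G → Q) (hc : ∀ g h : G, c (g * h) = c g * φ g (c h))
    (b : Q) (hb : ∀ t ∈ T, c t = b⁻¹ * φ t b) :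
    ∃! c' : G → Q,
      (∀ g h : G, c' (g * h) = c' g * φ g (c' h)) ∧
      (∃ a : Q, ∀ g : G, c' g = a⁻¹ * c g * φ g a) ∧
      (∀ t ∈ T, c' t = 1) := by
  refine ⟨fun g => b * c g * φ g b⁻¹, ⟨?_, ⟨b⁻¹, ?_⟩, ?_⟩, ?_⟩
  · intro g h
    simp [hc, map_mul, mul_assoc]
  · intro g
    simp
  · intro t ht
    simp [hb t ht]
  · rintro c' ⟨-, ⟨a, ha⟩, h1⟩
    have hba : b * a = 1 := by
      apply hfix
      intro t ht
      have h := h1 t ht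
      rw [ha t, hb t ht] at h
      have h2 : (b * a)⁻¹ * φ t (b * a) = 1 := by
        rw [← h, map_mul]
        group
      exact (inv_mul_eq_one.mp h2).symm
    have hab : a = b⁻¹ := eq_inv_of_mul_eq_one_right hba
    funext g
    rw [ha g, hab, inv_inv]
end

section
/- Let M ≥ 1, let α_1, …, α_M be positive integers, and let α be the least common multiple of α_1, …, α_M. For every natural number n, the number of tuples (x_1, …, x_M) ∈ ℕ^M with α_1 x_1 + ⋯ + α_M x_M = α·n is at least the binomial coefficient C(n + M − 1, M − 1). -/
/-- Lower bound in Lemma 8.3 of the paper: for positive integers `α₁, …, α_M` with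
least common multiple `α`, the number of tuples `x ∈ ℕ^M` with `Σ αᵢ xᵢ = α·n` is at
least `C(n + M - 1, M - 1)`. -/
theorem choose_le_count_solutions {M : ℕ} (hM : 1 ≤ M) (α : Fin M → ℕ)
    (hα : ∀ i, 0 < α i) (n : ℕ) :
    (n + M - 1).choose (M - 1) ≤
      Nat.card {x : Fin M → ℕ // ∑ i, α i * x i = (Finset.univ.lcm α) * n} := by
  set L := Finset.univ.lcm α with hL
  have hdvd : ∀ i, α i ∣ L := fun i => Finset.dvd_lcm (Finset.mem_univ i)
  have hLpos : 0 < L := by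
    rw [Nat.pos_iff_ne_zero, hL, Ne, Finset.lcm_eq_zero_iff]
    rintro ⟨i, -, hi⟩
    exact (hα i).ne' hi
  have hfin : Finite {x : Fin M → ℕ // ∑ i, α i * x i = L * n} := by
    refine Set.Finite.to_subtype (s := {x : Fin M → ℕ | ∑ i, α i * x i = L * n}) ?_
    refine (Set.finite_Iic (fun _ : Fin M => L * n)).subset ?_
    intro x hx i
    have h1 : α i * x i ≤ ∑ i, α i * x i :=
      Finset.single_le_sum (f := fun i => α i * x i) (fun _ _ => Nat.zero_le _)
        (Finset.mem_univ i)
    have hx' : ∑ i, α i * x i = L * n := hx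
    exact (Nat.le_mul_of_pos_left _ (hα i)).trans (h1.trans hx'.le)
  have hc : (n + M - 1).choose (M - 1) =
      Nat.card (Finset.finsuppAntidiag (Finset.univ : Finset (Fin M)) n) := by
    rw [Nat.card_eq_fintype_card, Fintype.card_coe,
      Finset.card_finsuppAntidiag_nat_eq_choose, Finset.card_univ, Fintype.card_fin]
    rw [Nat.add_comm M n]
    exact Nat.choose_symm_of_eq_add (by omega)
  rw [hc]
  refine Nat.card_le_card_of_injective
    (fun y => ⟨fun i => L / α i * y.1 i, ?_⟩) ?_
  · have hy := (Finset.mem_finsuppAntidiag.1 y.2).1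
    refine Eq.trans ?_ (congrArg (fun k => L * k) hy)
    simp only [Finset.mul_sum]
    refine Finset.sum_congr rfl fun i _ => ?_
    rw [← mul_assoc, Nat.mul_div_cancel' (hdvd i)]
  · intro y z h
    apply Subtype.ext
    ext i
    have h2 := congrFun (Subtype.ext_iff.1 h) i
    exact Nat.eq_of_mul_eq_mul_left
      (Nat.div_pos (Nat.le_of_dvd hLpos (hdvd i)) (hα i)) h2
end

section
/- Let M > M' ≥ 0 be natural numbers, let α_1, …, α_M and β_1, …, β_{M'} be positive integers. Then there exists a natural number n such that the number of tuples x ∈ ℕ^M with Σ_i α_i x_i = n is strictly greater than the number of tuples y ∈ ℕ^{M'} with Σ_j β_j y_j = n. -/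
theorem fibre_coord_le {m : ℕ} (a : Fin m → ℕ) (ha : ∀ i, 0 < a i) (n : ℕ) (x : Fin m → ℕ)
    (hx : ∑ i, a i * x i = n) (i : Fin m) : x i ≤ n := by
  calc x i ≤ a i * x i := Nat.le_mul_of_pos_left _ (ha i)
    _ ≤ ∑ i, a i * x i :=
      Finset.single_le_sum (f := fun i => a i * x i) (fun _ _ => Nat.zero_le _) (Finset.mem_univ i)
    _ = n := hx

theorem fibre_card {m : ℕ} (a : Fin m → ℕ) (ha : ∀ i, 0 < a i) (n N : ℕ) (hn : n ≤ N) :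
    Nat.card {x : Fin m → ℕ // ∑ i, a i * x i = n} =
      ((Fintype.piFinset (fun _ : Fin m => Finset.range (N + 1))).filter
        (fun x => ∑ i, a i * x i = n)).card := by
  refine Nat.subtype_card _ fun x => ?_
  simp only [Finset.mem_filter, Fintype.mem_piFinset, Finset.mem_range]
  refine ⟨fun hx => hx.2, fun hx => ⟨fun i => ?_, hx⟩⟩
  have := fibre_coord_le a ha n x hx i
  omega

/-- The coefficient-comparison principle of Section 8 of the paper: a product of
`M` geometric-series factors eventually has strictly larger coefficients than a
product of `M' < M` such factors.  In counting terms: for some `n`, the number of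
`x ∈ ℕ^M` with `Σ αᵢ xᵢ = n` strictly exceeds the number of `y ∈ ℕ^{M'}` with
`Σ βⱼ yⱼ = n`. -/
theorem exists_count_gt {M M' : ℕ} (h : M' < M)
    (α : Fin M → ℕ) (hα : ∀ i, 0 < α i)
    (β : Fin M' → ℕ) (hβ : ∀ j, 0 < β j) :
    ∃ n : ℕ, Nat.card {y : Fin M' → ℕ // ∑ j, β j * y j = n} <
      Nat.card {x : Fin M → ℕ // ∑ i, α i * x i = n} := by
  by_contra! hc
  obtain ⟨A, hA⟩ : ∃ A, A = ∑ i, α i := ⟨_, rfl⟩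
  obtain ⟨K, hK⟩ : ∃ K, K = (A + 1) ^ M' := ⟨_, rfl⟩
  have hApos : 1 ≤ A := by
    have : α ⟨0, by omega⟩ ≤ ∑ i, α i :=
      Finset.single_le_sum (f := α) (fun _ _ => Nat.zero_le _) (Finset.mem_univ _)
    have := hα ⟨0, by omega⟩
    omega
  have hKN : K ≤ A * K := Nat.le_mul_of_pos_left _ hApos
  have h1 : (K + 1) ^ M ≤ ∑ n ∈ Finset.range (A * K + 1),
      Nat.card {x : Fin M → ℕ // ∑ i, α i * x i = n} := by
    have hm : ∀ x ∈ Fintype.piFinset (fun _ : Fin M => Finset.range (K + 1)),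
        ∑ i, α i * x i ∈ Finset.range (A * K + 1) := by
      intro x hx
      rw [Finset.mem_range, Nat.lt_succ_iff, hA, Finset.sum_mul]
      refine Finset.sum_le_sum fun i _ => Nat.mul_le_mul_left _ ?_
      have := Fintype.mem_piFinset.1 hx i
      rw [Finset.mem_range] at this
      omega
    have := Finset.card_eq_sum_card_fiberwise hm
    rw [Fintype.card_piFinset_const, Finset.card_range] at this
    rw [this]
    refine Finset.sum_le_sum fun n hn => ?_
    rw [fibre_card α hα n (A * K) (by simpa [Nat.lt_succ_iff] using hn)]
    refine Finset.card_le_card (Finset.filter_subset_filter _ ?_)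
    refine Fintype.piFinset_subset _ _ fun _ => ?_
    exact Finset.range_mono (by omega)
  have h2 : ∑ n ∈ Finset.range (A * K + 1),
      Nat.card {y : Fin M' → ℕ // ∑ j, β j * y j = n} ≤ (A * K + 1) ^ M' := by
    calc _ = ∑ n ∈ Finset.range (A * K + 1),
          ((Fintype.piFinset (fun _ : Fin M' => Finset.range (A * K + 1))).filter
            (fun x => ∑ i, β i * x i = n)).card :=
          Finset.sum_congr rfl fun n hn =>
            fibre_card β hβ n (A * K) (by simpa [Nat.lt_succ_iff] using hn)
      _ ≤ (Fintype.piFinset (fun _ : Fin M' => Finset.range (A * K + 1))).card := by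
          rw [← Finset.card_biUnion]
          · refine Finset.card_le_card (Finset.biUnion_subset.2 fun n _ => Finset.filter_subset _ _)
          · intro a _ b _ hab
            rw [Function.onFun, Finset.disjoint_left]
            intro x hx hy
            exact hab ((Finset.mem_filter.1 hx).2.symm.trans (Finset.mem_filter.1 hy).2)
      _ = _ := by rw [Fintype.card_piFinset_const, Finset.card_range]
  have h3 : (K + 1) ^ M ≤ (A * K + 1) ^ M' :=
    h1.trans ((Finset.sum_le_sum fun n _ => hc n).trans h2)
  have h4 : (K + 1) ^ (M' + 1) ≤ (K + 1) ^ M := Nat.pow_le_pow_right (by omega) h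
  have h5 : (A * K + 1) ^ M' ≤ ((A + 1) * (K + 1)) ^ M' := Nat.pow_le_pow_left (by nlinarith) _
  rw [mul_pow, ← hK] at h5
  rw [pow_succ, mul_comm] at h4
  have h6 := Nat.le_of_mul_le_mul_right (h4.trans (h3.trans h5)) (by positivity)
  omega
end

section
/- Let w ≥ 1 and let ℓ_1, …, ℓ_w, s, r be natural numbers with s ≥ 1. Suppose that ℓ_1 + ℓ_2 + ⋯ + ℓ_w > s·ℓ_1 + r·(ℓ_3 + ℓ_5 + ⋯ + ℓ_{r'}), where r' is the largest odd integer with 3 ≤ r' ≤ w (the second sum ranging over odd m with 3 ≤ m ≤ w, and being zero if w < 3). Then there exists a natural number n such that the coefficient of t^n in ∏_{m=1}^{w} (1 − t^m)^{−ℓ_m} is strictly greater than the coefficient of t^n in (1 − t)^{−s·ℓ_1} · ∏_{m odd, 3 ≤ m ≤ w} (1 − t^m)^{−r·ℓ_m}. Equivalently, the number of solutions in natural numbers of the partition-counting problem attached to the first product exceeds, for some n, that attached to the second. -/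
/-- The number of solutions in natural numbers of `Σᵢ αᵢ xᵢ = n`, where the parts `αᵢ`
(with multiplicity) are given by the list `α`.  This is the coefficient of `tⁿ` in
`∏ᵢ (1 - t^{αᵢ})⁻¹`. -/
noncomputable def coeffCount (α : List ℕ) (n : ℕ) : ℕ :=
  Nat.card {x : Fin α.length → ℕ // ∑ i, α.get i * x i = n}

/-- Solutions below `N` lie in a box. -/
lemma coeffCount_eq_box (α : List ℕ) (hα : ∀ a ∈ α, 1 ≤ a) (N n : ℕ) (hn : n ≤ N) :
    coeffCount α n =
      ((Fintype.piFinset (fun _ : Fin α.length => Finset.range (N + 1))).filter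
        (fun x => ∑ i, α.get i * x i = n)).card := by
  unfold coeffCount
  rw [← Nat.card_eq_finsetCard]
  refine Nat.card_congr (Equiv.subtypeEquivRight fun x => ?_)
  rw [Finset.mem_filter, Fintype.mem_piFinset]
  refine ⟨fun hx => ⟨fun i => ?_, hx⟩, fun hx => hx.2⟩
  have h1 : 1 ≤ α.get i := hα _ (List.get_mem α i)
  have h2 : α.get i * x i ≤ ∑ i, α.get i * x i :=
    Finset.single_le_sum (f := fun i => α.get i * x i) (fun _ _ => Nat.zero_le _)
      (Finset.mem_univ i)
  have h3 : x i ≤ α.get i * x i := Nat.le_mul_of_pos_left _ h1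
  rw [Finset.mem_range]
  omega

lemma sum_coeffCount (α : List ℕ) (hα : ∀ a ∈ α, 1 ≤ a) (N : ℕ) :
    ∑ n ∈ Finset.range (N + 1), coeffCount α n =
      ((Fintype.piFinset (fun _ : Fin α.length => Finset.range (N + 1))).filter
        (fun x => ∑ i, α.get i * x i ≤ N)).card := by
  rw [Finset.card_eq_sum_card_fiberwise (f := fun x => ∑ i, α.get i * x i)
    (t := Finset.range (N + 1))]
  · refine Finset.sum_congr rfl fun n hn => ?_
    have hn' : n ≤ N := by simpa [Nat.lt_succ_iff] using hn
    rw [coeffCount_eq_box α hα N n hn', Finset.filter_filter]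
    congr 1
    refine Finset.filter_congr fun x _ => ?_
    constructor
    · intro hx
      exact ⟨by omega, hx⟩
    · exact fun hx => hx.2
  · intro x hx
    have := (Finset.mem_filter.mp hx).2
    simp only [Finset.coe_range, Set.mem_Iio]
    omega

lemma exists_coeffCount_lt (α β : List ℕ) (hα : ∀ a ∈ α, 1 ≤ a) (hβ : ∀ a ∈ β, 1 ≤ a)
    (h : β.length < α.length) : ∃ n, coeffCount β n < coeffCount α n := by
  by_contra! hcon
  set S := ∑ i, α.get i with hS
  set k := (S + 1) ^ β.length with hk
  have hle : ∑ n ∈ Finset.range (k * S + 1), coeffCount α n ≤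
      ∑ n ∈ Finset.range (k * S + 1), coeffCount β n :=
    Finset.sum_le_sum fun n _ => hcon n
  have hup : ∑ n ∈ Finset.range (k * S + 1), coeffCount β n ≤ (k * S + 1) ^ β.length := by
    rw [sum_coeffCount β hβ]
    refine (Finset.card_filter_le _ _).trans ?_
    simp
  have hlow : (k + 1) ^ α.length ≤ ∑ n ∈ Finset.range (k * S + 1), coeffCount α n := by
    rw [sum_coeffCount α hα]
    have : (k + 1) ^ α.length =
        (Fintype.piFinset (fun _ : Fin α.length => Finset.range (k + 1))).card := by simp
    rw [this]
    refine Finset.card_le_card fun x hx => ?_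
    rw [Fintype.mem_piFinset] at hx
    have hx' : ∀ i, x i ≤ k := fun i => by simpa [Nat.lt_succ_iff] using hx i
    have hsum : ∑ i, α.get i * x i ≤ k * S := by
      rw [hS, Finset.mul_sum]
      refine Finset.sum_le_sum fun i _ => ?_
      rw [mul_comm]
      exact Nat.mul_le_mul_right _ (hx' i)
    rw [Finset.mem_filter, Fintype.mem_piFinset]
    refine ⟨fun i => ?_, hsum⟩
    have h1 : 1 ≤ α.get i := hα _ (List.get_mem α i)
    have h2 : α.get i * x i ≤ ∑ i, α.get i * x i :=
      Finset.single_le_sum (f := fun i => α.get i * x i) (fun _ _ => Nat.zero_le _)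
        (Finset.mem_univ i)
    have h3 : x i ≤ α.get i * x i := Nat.le_mul_of_pos_left _ h1
    rw [Finset.mem_range]
    omega
  have h1 : (k + 1) ^ (β.length + 1) ≤ (k + 1) ^ α.length :=
    Nat.pow_le_pow_right (by omega) h
  have h2 : (k * S + 1) ^ β.length ≤ k * (k + 1) ^ β.length := by
    have : k * (k + 1) ^ β.length = ((S + 1) * (k + 1)) ^ β.length := by
      rw [mul_pow, ← hk]
    rw [this]
    refine Nat.pow_le_pow_left ?_ _
    nlinarith
  have h3 : 0 < (k + 1) ^ β.length := by positivity
  rw [pow_succ] at h1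
  nlinarith

/-- The Corollary of Section 8 of the paper (Hadian's criterion): if
`ℓ₁ + ⋯ + ℓ_w > s·ℓ₁ + r·(ℓ₃ + ℓ₅ + ⋯)`, then for some `n` the coefficient of `tⁿ` in
`∏_{m=1}^{w} (1 - t^m)^{-ℓ_m}` strictly exceeds the coefficient of `tⁿ` in
`(1-t)^{-s·ℓ₁} · ∏_{m odd, 3 ≤ m ≤ w} (1 - t^m)^{-r·ℓ_m}`, both coefficients being
expressed as counts of solutions of the associated partition problems. -/
theorem hadian_criterion (w : ℕ) (hw : 1 ≤ w) (ℓ : ℕ → ℕ) (s r : ℕ) (hs : 1 ≤ s)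
    (h : s * ℓ 1 + r * ∑ m ∈ (Finset.Icc 3 w).filter (fun m => m % 2 = 1), ℓ m <
      ∑ m ∈ Finset.Icc 1 w, ℓ m) :
    ∃ n : ℕ,
      coeffCount
        (List.replicate (s * ℓ 1) 1 ++
          ((List.range' 3 (w - 2)).filter (fun m => m % 2 = 1)).flatMap
            (fun m => List.replicate (r * ℓ m) m)) n <
      coeffCount ((List.range' 1 w).flatMap fun m => List.replicate (ℓ m) m) n := by
  apply exists_coeffCount_lt
  · intro a ha
    simp only [List.mem_flatMap, List.mem_range'_1, List.mem_replicate] at ha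
    obtain ⟨m, hm, _, rfl⟩ := ha
    exact hm.1
  · intro a ha
    simp only [List.mem_append, List.mem_flatMap, List.mem_filter, List.mem_range'_1,
      List.mem_replicate] at ha
    rcases ha with ⟨_, rfl⟩ | ⟨m, hm, _, rfl⟩
    · exact le_rfl
    · omega
  · have e1 : ((List.range' 1 w).flatMap fun m => List.replicate (ℓ m) m).length =
        ∑ m ∈ Finset.Icc 1 w, ℓ m := by
      have hf : Finset.Icc 1 w = (List.range' 1 w).toFinset := by
        ext x; simp only [Finset.mem_Icc, List.mem_toFinset, List.mem_range'_1]; omega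
      rw [hf, List.sum_toFinset _ List.nodup_range', List.length_flatMap]
      simp
    have e2 : (((List.range' 3 (w - 2)).filter (fun m => m % 2 = 1)).flatMap
            (fun m => List.replicate (r * ℓ m) m)).length =
        r * ∑ m ∈ (Finset.Icc 3 w).filter (fun m => m % 2 = 1), ℓ m := by
      have hf : (Finset.Icc 3 w).filter (fun m => m % 2 = 1) =
          ((List.range' 3 (w - 2)).filter (fun m => m % 2 = 1)).toFinset := by
        ext x
        simp only [Finset.mem_filter, Finset.mem_Icc, List.mem_toFinset, List.mem_filter,
          List.mem_range'_1, decide_eq_true_eq]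
        omega
      rw [Finset.mul_sum, hf, List.sum_toFinset _ (List.Nodup.filter _ List.nodup_range'),
        List.length_flatMap]
      simp
    rw [List.length_append, List.length_replicate, e1, e2]
    exact h
end

section
/- Let k ≥ 1 and s ≥ 1 be integers. For n ∈ ℕ let d_n be the number of solutions in natural numbers of x_1 + x_2 + Σ_{m=2}^{2k} m·y_m = n (the coefficient of t^n in (1−t)^{−2}·∏_{m=2}^{2k}(1−t^m)^{−1}), and let c_n be the number of solutions in natural numbers of z_1 + ⋯ + z_{2s} + Σ_{j=1}^{k−1} (2j+1)·w_j = n (the coefficient of t^n in (1−t)^{−2s}·∏_{j=1}^{k−1}(1−t^{2j+1})^{−1}). Then there exists n with d_n > c_n if and only if k > 2(s − 1). -/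
lemma le_of_wsum {l : List ℕ} (hl : ∀ a ∈ l, 1 ≤ a) {n : ℕ} {x : Fin l.length → ℕ}
    (hx : ∑ i, l.get i * x i ≤ n) (i : Fin l.length) : x i ≤ n := by
  have h1 : l.get i * x i ≤ ∑ i, l.get i * x i :=
    Finset.single_le_sum (f := fun i => l.get i * x i) (fun _ _ => Nat.zero_le _)
      (Finset.mem_univ i)
  have h2 : 1 ≤ l.get i := hl _ (List.get_mem l i)
  nlinarith

lemma finite_sol {l : List ℕ} (hl : ∀ a ∈ l, 1 ≤ a) (n : ℕ) :
    Finite {x : Fin l.length → ℕ // ∑ i, l.get i * x i = n} := by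
  let f : {x : Fin l.length → ℕ // ∑ i, l.get i * x i = n} → (Fin l.length → Fin (n + 1)) :=
    fun x i => ⟨x.1 i, Nat.lt_succ_of_le (le_of_wsum hl x.2.le i)⟩
  refine Finite.of_injective f ?_
  intro x y h
  apply Subtype.ext
  funext i
  have := congrFun h i
  simpa [f] using this

lemma wsum_cons (a : ℕ) (l : List ℕ) (x : Fin (a :: l).length → ℕ) :
    ∑ i, (a :: l).get i * x i = a * x 0 + ∑ i : Fin l.length, l.get i * x i.succ := by
  exact Fin.sum_univ_succ (n := l.length) (fun i => (a :: l).get i * x i)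

lemma count_upper {l : List ℕ} (hl : ∀ a ∈ l, 1 ≤ a) (n : ℕ) :
    coeffCount (1 :: l) n ≤ (n + 1) ^ l.length := by
  let f : {x : Fin (1 :: l).length → ℕ // ∑ i, (1 :: l).get i * x i = n} →
      (Fin l.length → Fin (n + 1)) :=
    fun x i => ⟨x.1 i.succ, Nat.lt_succ_of_le
      (le_of_wsum (x := fun i => x.1 i.succ) hl (by have := x.2; rw [wsum_cons] at this; omega) i)⟩
  have hf : Function.Injective f := by
    intro x y h
    have h' : ∀ i : Fin l.length, x.1 i.succ = y.1 i.succ := by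
      intro i
      have := congrFun h i
      simpa [f] using this
    apply Subtype.ext
    funext i
    refine Fin.cases ?_ h' i
    have hx := x.2
    have hy := y.2
    rw [wsum_cons] at hx hy
    simp only [h'] at hx
    omega
  have := Nat.card_le_card_of_injective f hf
  simpa [coeffCount] using this

lemma count_lower {l : List ℕ} (hl : ∀ a ∈ l, 1 ≤ a) (m : ℕ) :
    (m + 1) ^ l.length ≤ coeffCount (1 :: l) (m * ∑ i, l.get i) := by
  have hb : ∀ x : Fin l.length → Fin (m + 1),
      ∑ i, l.get i * (x i : ℕ) ≤ m * ∑ i, l.get i := by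
    intro x
    rw [Finset.mul_sum]
    refine Finset.sum_le_sum fun i _ => ?_
    rw [mul_comm]
    exact Nat.mul_le_mul_right _ (Nat.le_of_lt_succ (x i).2)
  let f : (Fin l.length → Fin (m + 1)) →
      {x : Fin (1 :: l).length → ℕ // ∑ i, (1 :: l).get i * x i = m * ∑ i, l.get i} :=
    fun x => ⟨Fin.cons (α := fun _ : Fin (l.length + 1) => ℕ)
      (m * ∑ i, l.get i - ∑ i, l.get i * (x i : ℕ)) (fun i => (x i : ℕ)), by
        rw [wsum_cons]
        have := hb x
        have e : ∀ c : ℕ, 1 * (Fin.cons (α := fun _ : Fin (l.length + 1) => ℕ) c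
          (fun i => (x i : ℕ)) 0) + ∑ i : Fin l.length, l.get i *
          (Fin.cons (α := fun _ : Fin (l.length + 1) => ℕ) c
          (fun i => (x i : ℕ)) i.succ) = c + ∑ i, l.get i * (x i : ℕ) := by
          intro c
          simp
        refine (e _).trans ?_
        omega⟩
  have hf : Function.Injective f := by
    intro x y h
    funext i
    have := congrFun (congrArg Subtype.val h) i.succ
    exact Fin.ext this
  have := finite_sol (l := 1 :: l) (by simpa using hl) (m * ∑ i, l.get i)
  have := Nat.card_le_card_of_injective f hf
  simpa [coeffCount] using this

/-- The geometric series in `t^a`. -/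
noncomputable def geo (a : ℕ) : PowerSeries ℕ := PowerSeries.mk fun n => if a ∣ n then 1 else 0

lemma count_cons {a : ℕ} (ha : 1 ≤ a) {l : List ℕ} (hl : ∀ a ∈ l, 1 ≤ a) (n : ℕ) :
    coeffCount (a :: l) n =
      ∑ p ∈ Finset.HasAntidiagonal.antidiagonal n, (if a ∣ p.1 then 1 else 0) * coeffCount l p.2 := by
  have := fun n => finite_sol hl n
  let e : {x : Fin (a :: l).length → ℕ // ∑ i, (a :: l).get i * x i = n} ≃
      Σ p : {p // p ∈ Finset.HasAntidiagonal.antidiagonal n},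
        {_y : Unit // a ∣ p.1.1} × {x : Fin l.length → ℕ // ∑ i, l.get i * x i = p.1.2} :=
    { toFun := fun x => ⟨⟨(a * x.1 0, ∑ i : Fin l.length, l.get i * x.1 i.succ), by
          rw [Finset.HasAntidiagonal.mem_antidiagonal, ← wsum_cons]; exact x.2⟩,
          ⟨(), Dvd.intro _ rfl⟩, ⟨fun i => x.1 i.succ, rfl⟩⟩
      invFun := fun q => ⟨Fin.cons (α := fun _ : Fin (l.length + 1) => ℕ)
          (q.1.1.1 / a) q.2.2.1, by
          rw [wsum_cons]
          have h1 := Nat.mul_div_cancel' q.2.1.2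
          have h2 := q.2.2.2
          have h3 := Finset.HasAntidiagonal.mem_antidiagonal.1 q.1.2
          refine Eq.trans ?_ h3
          exact congrArg₂ (· + ·) h1 h2⟩
      left_inv := by
        intro x
        apply Subtype.ext
        funext i
        refine Fin.cases ?_ (fun i => rfl) i
        exact Nat.mul_div_cancel_left _ ha
      right_inv := by
        rintro ⟨⟨⟨p, q⟩, hp⟩, ⟨⟨⟩, c, hc⟩, ⟨x, hx⟩⟩
        dsimp only at hc hx
        subst hc
        subst hx
        have : a * (a * c / a) = a * c := by rw [Nat.mul_div_cancel_left _ ha]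
        refine Sigma.ext (Subtype.ext (Prod.ext this rfl)) ?_
        dsimp
        congr! <;> exact Nat.mul_div_cancel_left _ ha }
  rw [coeffCount, Nat.card_congr e, Nat.card_sigma, ← Finset.sum_coe_sort (Finset.HasAntidiagonal.antidiagonal n)]
  refine Finset.sum_congr rfl fun p _ => ?_
  rw [Nat.card_prod]
  congr 1
  by_cases h : a ∣ p.1.1 <;> simp [h]

lemma count_eq_coeff {l : List ℕ} (hl : ∀ a ∈ l, 1 ≤ a) (n : ℕ) :
    coeffCount l n = PowerSeries.coeff n (l.map geo).prod := by
  induction l generalizing n with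
  | nil =>
    rw [List.map_nil, List.prod_nil, PowerSeries.coeff_one]
    by_cases h : n = 0
    · subst h; simp [coeffCount]
    · simp [coeffCount, h, Ne.symm h]
  | cons a l ih =>
    have hl' : ∀ a ∈ l, 1 ≤ a := fun b hb => hl b (List.mem_cons_of_mem _ hb)
    rw [count_cons (hl a List.mem_cons_self) hl', List.map_cons, List.prod_cons,
      PowerSeries.coeff_mul]
    refine Finset.sum_congr rfl fun p _ => ?_
    rw [ih hl', geo, PowerSeries.coeff_mk]

/-- Coefficientwise comparison. -/
def CLe (A B : PowerSeries ℕ) : Prop := ∀ n, PowerSeries.coeff n A ≤ PowerSeries.coeff n B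

lemma CLe.mul {A B A' B' : PowerSeries ℕ} (h : CLe A A') (h' : CLe B B') :
    CLe (A * B) (A' * B') := by
  intro n
  rw [PowerSeries.coeff_mul, PowerSeries.coeff_mul]
  exact Finset.sum_le_sum fun p _ => Nat.mul_le_mul (h _) (h' _)

lemma CLe.rfl' (A : PowerSeries ℕ) : CLe A A := fun _ => le_rfl

lemma geo_le (a : ℕ) : CLe (geo a) (geo 1) := by
  intro n
  simp only [geo, PowerSeries.coeff_mk, one_dvd, if_true]
  split_ifs <;> simp

lemma one_le_geo : CLe 1 (geo 1) := by
  intro n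
  simp only [geo, PowerSeries.coeff_mk, one_dvd, if_true, PowerSeries.coeff_one]
  split_ifs <;> simp

lemma one_le_geo_pow (r : ℕ) : CLe 1 (geo 1 ^ r) := by
  induction r with
  | zero => simpa using CLe.rfl' 1
  | succ r ih => simpa [pow_succ] using ih.mul one_le_geo

lemma evens_le (k : ℕ) : CLe (∏ j ∈ Finset.range k, geo (2 * j + 2)) (geo 1 ^ k) := by
  induction k with
  | zero => simpa using CLe.rfl' 1
  | succ k ih => rw [Finset.prod_range_succ, pow_succ]; exact ih.mul (geo_le _)

lemma range_prod (k : ℕ) : ((List.range' 2 (2 * k + 1)).map geo).prod =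
    (∏ j ∈ Finset.range k, geo (2 * j + 3)) * ∏ j ∈ Finset.range (k + 1), geo (2 * j + 2) := by
  induction k with
  | zero => simp
  | succ k ih =>
    have : 2 * (k + 1) + 1 = 2 * k + 1 + 1 + 1 := by ring
    rw [this, List.range'_concat, List.range'_concat, List.map_append, List.map_append,
      List.prod_append, List.prod_append, ih, Finset.prod_range_succ (fun j => geo (2 * j + 2)) (k + 1),
      Finset.prod_range_succ (fun j => geo (2 * j + 3)) k]
    simp only [List.map_cons, List.map_nil, List.prod_cons, List.prod_nil, mul_one]
    have e1 : 2 + 1 * (2 * k + 1) = 2 * k + 3 := by ring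
    have e2 : 2 + 1 * (2 * k + 1 + 1) = 2 * (k + 1) + 2 := by ring
    rw [e1, e2]
    ring

lemma odds_prod (k : ℕ) : (((List.range k).map (fun j => 2 * j + 3)).map geo).prod =
    ∏ j ∈ Finset.range k, geo (2 * j + 3) := by
  rw [List.map_map, Finset.prod_range]
  induction k with
  | zero => simp
  | succ k ih => simp [List.range_succ, Fin.prod_univ_castSucc, ← ih]

theorem depth_one_criterion (k s : ℕ) (hk : 1 ≤ k) (hs : 1 ≤ s) :
    (∃ n : ℕ,
      coeffCount
        (List.replicate (2 * s) 1 ++ (List.range (k - 1)).map (fun j => 2 * j + 3)) n <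
      coeffCount ([1, 1] ++ List.range' 2 (2 * k - 1)) n) ↔
    2 * (s - 1) < k := by
  obtain ⟨k, rfl⟩ : ∃ k', k = k' + 1 := ⟨k - 1, by omega⟩
  obtain ⟨s, rfl⟩ : ∃ s', s = s' + 1 := ⟨s - 1, by omega⟩
  have e1 : 2 * (k + 1) - 1 = 2 * k + 1 := by omega
  rw [e1, Nat.add_sub_cancel, Nat.add_sub_cancel]
  constructor
  · rintro ⟨n, hn⟩
    by_contra hlt
    rw [not_lt] at hlt
    refine absurd hn (not_lt.2 ?_)
    rw [count_eq_coeff, count_eq_coeff]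
    · rw [List.map_append, List.map_append, List.prod_append, List.prod_append, range_prod,
        odds_prod]
      obtain ⟨r, hr⟩ := Nat.exists_eq_add_of_le hlt
      have e2 : ((List.replicate (2 * (s + 1)) 1).map geo).prod *
          ∏ j ∈ Finset.range k, geo (2 * j + 3) =
          (geo 1 * geo 1) * ((∏ j ∈ Finset.range k, geo (2 * j + 3)) *
            (geo 1 ^ (k + 1) * geo 1 ^ r)) := by
        rw [List.map_replicate, List.prod_replicate, ← pow_add, ← hr]
        ring
      rw [e2]
      have e3 : (([1, 1] : List ℕ).map geo).prod = geo 1 * geo 1 := by simp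
      rw [e3]
      have h := (evens_le (k + 1)).mul (one_le_geo_pow r)
      rw [mul_one] at h
      exact ((CLe.rfl' _).mul ((CLe.rfl' _).mul h)) n
    · intro a ha
      simp only [List.mem_append, List.mem_replicate, List.mem_map] at ha
      rcases ha with ha | ⟨j, _, ha⟩ <;> omega
    · intro a ha
      simp only [List.mem_append, List.mem_cons, List.mem_range'_1, List.not_mem_nil,
        or_false] at ha
      rcases ha with (ha | ha) | ha <;> omega
  · intro h
    set l : List ℕ := 1 :: List.range' 2 (2 * k + 1) with hldef
    set l' : List ℕ := List.replicate (2 * s + 1) 1 ++ (List.range k).map (fun j => 2 * j + 3)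
      with hldef'
    have hl : ∀ a ∈ l, 1 ≤ a := by
      intro a ha
      simp only [hldef, List.mem_cons, List.mem_range'_1] at ha
      omega
    have hl' : ∀ a ∈ l', 1 ≤ a := by
      intro a ha
      simp only [hldef', List.mem_append, List.mem_replicate, List.mem_map] at ha
      rcases ha with ha | ⟨j, _, ha⟩ <;> omega
    have e2 : List.replicate (2 * (s + 1)) 1 ++ (List.range k).map (fun j => 2 * j + 3)
        = 1 :: l' := by
      have : 2 * (s + 1) = 2 * s + 1 + 1 := by ring
      rw [this, List.replicate_succ, List.cons_append]
    have e3 : [1, 1] ++ List.range' 2 (2 * k + 1) = 1 :: l := rfl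
    rw [e2, e3]
    have hlen : l.length = 2 * k + 2 := by simp [hldef]
    have hlen' : l'.length ≤ 2 * k + 1 := by
      simp [hldef']
      omega
    set S := ∑ i, l.get i with hS
    have hS1 : 1 ≤ S := by
      have h0 : l.get ⟨0, by omega⟩ ≤ S :=
        Finset.single_le_sum (f := fun i => l.get i) (fun _ _ => Nat.zero_le _)
          (Finset.mem_univ _)
      exact h0
    refine ⟨S ^ (2 * k + 1) * S, ?_⟩
    refine lt_of_lt_of_le ?_ (count_lower hl (S ^ (2 * k + 1)))
    refine lt_of_le_of_lt (count_upper hl' _) ?_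
    rw [hlen]
    set m := S ^ (2 * k + 1) with hm
    calc (m * S + 1) ^ l'.length ≤ (m * S + 1) ^ (2 * k + 1) :=
          Nat.pow_le_pow_right (by omega) hlen'
      _ ≤ ((m + 1) * S) ^ (2 * k + 1) := Nat.pow_le_pow_left (by nlinarith) _
      _ = (m + 1) ^ (2 * k + 1) * m := by rw [mul_pow]
      _ < (m + 1) ^ (2 * k + 1) * (m + 1) :=
          Nat.mul_lt_mul_of_pos_left (Nat.lt_succ_self m) (by positivity)
      _ = (m + 1) ^ (2 * k + 2) := by rw [← pow_succ]
end

section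
/- Let S be a finite set of prime numbers. Call a nonzero rational number u an S-unit if for every prime p not in S the p-adic valuation of u is zero. Then the set of pairs (u, v) of S-units of ℚ satisfying u + v = 1 is finite. -/
lemma sue_beta (n : ℕ) : ∀ m : ℕ, ∫ s in (0:ℝ)..1, s ^ m * (1 - s) ^ n =
    (m.factorial * n.factorial : ℝ) / ((m + n + 1).factorial : ℝ) := by
  induction n with
  | zero =>
    intro m
    simp [Nat.factorial_succ]
    field_simp
  | succ n ih =>
    intro m
    have hder : ∀ s : ℝ, HasDerivAt (fun s : ℝ => s ^ (m + 1) * (1 - s) ^ (n + 1))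
        ((m + 1) * (s ^ m * (1 - s) ^ (n + 1)) - (n + 1) * (s ^ (m + 1) * (1 - s) ^ n)) s := by
      intro s
      have h1 := (hasDerivAt_pow (m + 1) s).mul
        (((hasDerivAt_id s).const_sub 1).pow (n + 1))
      refine h1.congr_deriv ?_
      simp
      ring
    have hint := intervalIntegral.integral_eq_sub_of_hasDerivAt (a := 0) (b := 1)
      (fun s _ => hder s) (by
        apply Continuous.intervalIntegrable; fun_prop)
    rw [intervalIntegral.integral_sub, intervalIntegral.integral_const_mul,
      intervalIntegral.integral_const_mul, ih (m + 1)] at hint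
    · simp at hint
      have e : m + 1 + n + 1 = m + (n + 1) + 1 := by ring
      rw [e] at hint
      have hm : (m + 1 : ℝ) ≠ 0 := by positivity
      apply mul_left_cancel₀ hm
      rw [sub_eq_zero.mp hint]
      rw [Nat.factorial_succ m, Nat.factorial_succ n]
      push_cast
      ring
    · apply Continuous.intervalIntegrable; fun_prop
    · apply Continuous.intervalIntegrable; fun_prop

/-- The common denominator of the Padé integrals. -/
def sueD (N : ℕ) : ℕ := (3 * N + 1) * (3 * N).choose N * (2 * N).choose N

lemma sueD_pos (N : ℕ) : 0 < sueD N := by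
  unfold sueD
  have := Nat.choose_pos (show N ≤ 3 * N by omega)
  have := Nat.choose_pos (show N ≤ 2 * N by omega)
  positivity

lemma sueD_le (N : ℕ) : sueD N ≤ 2 ^ (7 * N) := by
  unfold sueD
  have h1 : 3 * N + 1 ≤ 2 ^ (2 * N) := by
    rw [pow_mul]
    have := one_add_mul_le_pow (a := (3:ℤ)) (by norm_num) N
    norm_num at this ⊢
    zify
    linarith
  calc _ ≤ 2 ^ (2 * N) * 2 ^ (3 * N) * 2 ^ (2 * N) := by
        gcongr
        · exact Nat.choose_le_two_pow _ _
        · exact Nat.choose_le_two_pow _ _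
    _ = _ := by rw [← pow_add, ← pow_add]; congr 1; ring

lemma sueD_mul (j k : ℕ) : (sueD (j + k) : ℝ) * (((j + k).choose k : ℝ) *
    (((j + k + k).factorial * (j + k).factorial : ℝ) / ((j + k + k + (j + k) + 1).factorial : ℝ)))
    = (((j + k + k).choose k * (3 * (j + k) + 1).choose j : ℕ) : ℝ) := by
  unfold sueD
  push_cast
  rw [Nat.cast_choose ℝ (show j + k ≤ 3 * (j + k) by omega),
    Nat.cast_choose ℝ (show j + k ≤ 2 * (j + k) by omega),
    Nat.cast_choose ℝ (show k ≤ j + k by omega),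
    Nat.cast_choose ℝ (show k ≤ j + k + k by omega),
    Nat.cast_choose ℝ (show j ≤ 3 * (j + k) + 1 by omega)]
  rw [show 3 * (j + k) - (j + k) = 2 * (j + k) by omega,
    show 2 * (j + k) - (j + k) = j + k by omega,
    show j + k - k = j by omega, show j + k + k - k = j + k by omega,
    show 3 * (j + k) + 1 - j = j + k + k + (j + k) + 1 by omega,
    Nat.factorial_succ (3 * (j + k))]
  have h (n : ℕ) : (n.factorial : ℝ) ≠ 0 := by exact_mod_cast n.factorial_ne_zero
  have h1 := h (j + k)
  have h2 := h (2 * (j + k))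
  have h3 := h k
  have h4 := h j
  have h5 := h (j + k + k + (j + k) + 1)
  push_cast
  field_simp

/-- The Padé integral. -/
noncomputable def sueG (N : ℕ) (x y : ℝ) : ℝ :=
  ∫ s in (0:ℝ)..1, s ^ N * (1 - s) ^ N * (x + y * s) ^ N

lemma sueG_int (N : ℕ) (x y : ℤ) : ∃ g : ℤ, (sueD N : ℝ) * sueG N x y = g := by
  have h1 : sueG N x y = ∑ k ∈ Finset.range (N + 1),
      ((y : ℝ) ^ k * (x : ℝ) ^ (N - k)) * ((N.choose k : ℝ) *
        (((N + k).factorial * N.factorial : ℝ) / ((N + k + N + 1).factorial : ℝ))) := by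
    unfold sueG
    rw [intervalIntegral.integral_congr (g := fun s : ℝ => ∑ k ∈ Finset.range (N + 1),
      ((y : ℝ) ^ k * (x : ℝ) ^ (N - k) * (N.choose k : ℝ)) * (s ^ (N + k) * (1 - s) ^ N))]
    · rw [intervalIntegral.integral_finsetSum]
      · refine Finset.sum_congr rfl fun k _ => ?_
        rw [intervalIntegral.integral_const_mul, sue_beta]
        ring
      · intro i _
        apply Continuous.intervalIntegrable; fun_prop
    · intro s _
      simp only
      rw [add_comm (x : ℝ), add_pow, Finset.mul_sum]
      refine Finset.sum_congr rfl fun k _ => ?_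
      rw [mul_pow, pow_add]; ring
  refine ⟨∑ k ∈ Finset.range (N + 1), (y ^ k * x ^ (N - k)) *
    (((N + k).choose k * (3 * N + 1).choose (N - k) : ℕ) : ℤ), ?_⟩
  rw [h1, Finset.mul_sum]
  push_cast
  refine Finset.sum_congr rfl fun k hk => ?_
  obtain ⟨j, rfl⟩ : ∃ j, N = j + k := ⟨N - k, by simp at hk; omega⟩
  have := sueD_mul j k
  push_cast at this
  rw [show j + k - k = j by omega, ← this]
  ring

lemma sueG_abs_le (N : ℕ) (x y c : ℝ) (h : ∀ s ∈ Set.Icc (0:ℝ) 1, |x + y * s| ≤ c) :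
    |sueG N x y| ≤ c ^ N := by
  unfold sueG
  have := intervalIntegral.norm_integral_le_of_norm_le_const (a := 0) (b := 1) (C := c ^ N)
    (f := fun s : ℝ => s ^ N * (1 - s) ^ N * (x + y * s) ^ N) (by
      intro s hs
      rw [Set.uIoc_of_le zero_le_one] at hs
      have hc := h s ⟨hs.1.le, hs.2⟩
      rw [← mul_pow, ← mul_pow, norm_pow, Real.norm_eq_abs, abs_mul, abs_mul]
      apply pow_le_pow_left₀ (by positivity)
      rw [abs_of_pos hs.1, abs_of_nonneg (by linarith [hs.2] : 0 ≤ 1 - s)]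
      have : s * (1 - s) ≤ 1 := by nlinarith [hs.1, hs.2]
      have h0 : 0 ≤ s * (1 - s) := mul_nonneg hs.1.le (by linarith [hs.2])
      calc _ ≤ 1 * |x + y * s| := by gcongr
        _ ≤ c := by linarith)
  simpa using this

lemma sueG_pos (N : ℕ) (x y : ℝ) (h : ∀ s ∈ Set.Ioo (0:ℝ) 1, 0 < x + y * s) :
    0 < sueG N x y := by
  unfold sueG
  apply intervalIntegral.intervalIntegral_pos_of_pos_on
  · apply Continuous.intervalIntegrable; fun_prop
  · intro s hs
    have := h s hs
    have := hs.1
    have : 0 < 1 - s := by linarith [hs.2]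
    positivity
  · norm_num

lemma sueG_identity (N : ℕ) (hN : Odd N) (a b c : ℝ) (h : a + b = c) :
    a ^ (2 * N + 1) * sueG N c (-a) - b ^ (2 * N + 1) * sueG N a b
      = c ^ (2 * N + 1) * sueG N a (-c) := by
  subst h
  set f : ℝ → ℝ := fun t => t ^ N * (a + b - t) ^ N * (a - t) ^ N with hf
  have hi : ∀ u v : ℝ, IntervalIntegrable f MeasureTheory.volume u v := by
    intro u v
    apply Continuous.intervalIntegrable; fun_prop
  have hadd := intervalIntegral.integral_add_adjacent_intervals (hi 0 a) (hi a (a + b))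
  have h1 : ∫ t in (0:ℝ)..a, f t = a ^ (2 * N + 1) * sueG N (a + b) (-a) := by
    have := intervalIntegral.smul_integral_comp_mul_add (a := 0) (b := 1) f a 0
    simp only [mul_zero, mul_one, zero_add, add_zero, smul_eq_mul] at this
    rw [← this]
    unfold sueG
    rw [← intervalIntegral.integral_const_mul, ← intervalIntegral.integral_const_mul]
    congr 1; ext s
    simp only [hf]
    rw [show a - a * s = a * (1 - s) by ring, mul_pow, mul_pow,
      show a + b - a * s = a + b + -a * s by ring]
    ring
  have h2 : ∫ t in a..(a + b), f t = - (b ^ (2 * N + 1) * sueG N a b) := by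
    have := intervalIntegral.smul_integral_comp_mul_add (a := 0) (b := 1) f b a
    simp only [mul_zero, mul_one, zero_add, smul_eq_mul] at this
    rw [add_comm a b, ← this]
    unfold sueG
    rw [← intervalIntegral.integral_const_mul, ← intervalIntegral.integral_const_mul,
      ← intervalIntegral.integral_neg]
    congr 1; ext s
    simp only [hf]
    rw [show a + b - (b * s + a) = b * (1 - s) by ring, show a - (b * s + a) = - (b * s) by ring,
      hN.neg_pow, mul_pow, mul_pow, show a + b * s = b * s + a by ring]
    ring
  have h3 : ∫ t in (0:ℝ)..(a + b), f t = (a + b) ^ (2 * N + 1) * sueG N a (-(a + b)) := by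
    have := intervalIntegral.smul_integral_comp_mul_add (a := 0) (b := 1) f (a + b) 0
    simp only [mul_zero, mul_one, zero_add, add_zero, smul_eq_mul] at this
    rw [← this]
    unfold sueG
    rw [← intervalIntegral.integral_const_mul, ← intervalIntegral.integral_const_mul]
    congr 1; ext s
    simp only [hf]
    rw [show (a + b) - (a + b) * s = (a + b) * (1 - s) by ring, mul_pow, mul_pow,
      show a - (a + b) * s = a + -(a + b) * s by ring]
    ring
  rw [h1, h2, h3] at hadd
  linarith

lemma sue_key (N : ℕ) (hN : Odd N) (a b c t₁ t₂ t₃ T : ℕ) (ha : 0 < a) (hb : 0 < b)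
    (habc : a + b = c) (hcop : Nat.Coprime a c) (ht₁ : 0 < t₁) (ht₂ : 0 < t₂)
    (h₁ : t₁ ≤ T) (h₂ : t₂ ≤ T)
    (ht : t₁ * a ^ (2 * N + 1) + t₂ * b ^ (2 * N + 1) = t₃ * c ^ (2 * N + 1)) :
    c ^ (N + 1) ≤ 2 ^ (7 * N + 1) * T := by
  have hc : 0 < c := by omega
  have haR : (0:ℝ) < a := by exact_mod_cast ha
  have hbR : (0:ℝ) < b := by exact_mod_cast hb
  have habcR : (a:ℝ) + b = c := by exact_mod_cast habc
  have hD : (0:ℝ) < sueD N := by exact_mod_cast sueD_pos N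
  obtain ⟨p, hp⟩ := sueG_int N c (-a)
  obtain ⟨q, hq⟩ := sueG_int N a b
  obtain ⟨r, hr⟩ := sueG_int N a (-c)
  push_cast at hp hq hr
  have hid := sueG_identity N hN a b c habcR
  have hid' : p * (a:ℤ) ^ (2 * N + 1) - q * (b:ℤ) ^ (2 * N + 1) = r * (c:ℤ) ^ (2 * N + 1) := by
    have : (p:ℝ) * (a:ℝ) ^ (2 * N + 1) - q * (b:ℝ) ^ (2 * N + 1) = r * (c:ℝ) ^ (2 * N + 1) := by
      rw [← hp, ← hq, ← hr]
      linear_combination (sueD N : ℝ) * hid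
    exact_mod_cast this
  have hp0 : 0 < p := by
    have : (0:ℝ) < p := by
      rw [← hp]
      refine mul_pos hD (sueG_pos _ _ _ fun s hs => ?_)
      nlinarith [hs.1, hs.2]
    exact_mod_cast this
  have hq0 : 0 < q := by
    have : (0:ℝ) < q := by
      rw [← hq]
      refine mul_pos hD (sueG_pos _ _ _ fun s hs => ?_)
      nlinarith [hs.1, hs.2]
    exact_mod_cast this
  have hp1 : p ≤ sueD N * (c:ℤ) ^ N := by
    have : (p:ℝ) ≤ sueD N * (c:ℝ) ^ N := by
      rw [← hp]
      gcongr
      refine (le_abs_self _).trans (sueG_abs_le _ _ _ _ fun s hs => ?_)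
      rw [abs_le]
      constructor <;> nlinarith [hs.1, hs.2]
    exact_mod_cast this
  have hq1 : q ≤ sueD N * (c:ℤ) ^ N := by
    have : (q:ℝ) ≤ sueD N * (c:ℝ) ^ N := by
      rw [← hq]
      gcongr
      refine (le_abs_self _).trans (sueG_abs_le _ _ _ _ fun s hs => ?_)
      rw [abs_le]
      constructor <;> nlinarith [hs.1, hs.2]
    exact_mod_cast this
  have htZ : (t₁:ℤ) * a ^ (2 * N + 1) + t₂ * b ^ (2 * N + 1) = t₃ * c ^ (2 * N + 1) := by
    exact_mod_cast ht
  have hdvd : (c:ℤ) ^ (2 * N + 1) ∣ q * t₁ + t₂ * p := by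
    have h1 : (c:ℤ) ^ (2 * N + 1) ∣ (q * t₁ + t₂ * p) * (a:ℤ) ^ (2 * N + 1) :=
      ⟨q * t₃ + r * t₂, by linear_combination q * htZ + t₂ * hid'⟩
    refine IsCoprime.dvd_of_dvd_mul_right ?_ h1
    exact (Nat.isCoprime_iff_coprime.mpr hcop).symm.pow
  have hle := Int.le_of_dvd (by positivity) hdvd
  have hDle : (sueD N : ℤ) ≤ 2 ^ (7 * N) := by exact_mod_cast sueD_le N
  have hcN : (0:ℤ) < (c:ℤ) ^ N := by positivity
  have h3 : q * t₁ + t₂ * p ≤ 2 * (2 ^ (7 * N) * (c:ℤ) ^ N) * T := by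
    have e1 : q ≤ 2 ^ (7 * N) * (c:ℤ) ^ N := hq1.trans (by gcongr)
    have e2 : p ≤ 2 ^ (7 * N) * (c:ℤ) ^ N := hp1.trans (by gcongr)
    have e3 : (t₁:ℤ) ≤ T := by exact_mod_cast h₁
    have e4 : (t₂:ℤ) ≤ T := by exact_mod_cast h₂
    have f1 : q * t₁ ≤ (2 ^ (7 * N) * (c:ℤ) ^ N) * T := by gcongr
    have f2 : t₂ * p ≤ T * (2 ^ (7 * N) * (c:ℤ) ^ N) := by gcongr
    linarith
  have h4 : (c:ℤ) ^ N * (c:ℤ) ^ (N + 1) ≤ (c:ℤ) ^ N * (2 ^ (7 * N + 1) * T) := by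
    calc _ = (c:ℤ) ^ (2 * N + 1) := by rw [← pow_add]; congr 1; ring
      _ ≤ _ := hle.trans h3
      _ = _ := by ring
  have h5 := le_of_mul_le_mul_left h4 hcN
  exact_mod_cast h5

/-- The three components `a, b, a + b` of a solution. -/
def sueC (x : ℕ × ℕ) (i : Fin 3) : ℕ := ![x.1, x.2, x.1 + x.2] i

/-- The positive coprime solutions. -/
def sueX (S : Finset ℕ) : Set (ℕ × ℕ) :=
  {x | 0 < x.1 ∧ 0 < x.2 ∧ Nat.Coprime x.1 (x.1 + x.2) ∧
    ∀ i, (sueC x i).primeFactors ⊆ S}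

/-- The size of the exponent vector. -/
def sueN (S : Finset ℕ) (x : ℕ × ℕ) : ℕ :=
  ((Finset.univ : Finset (Fin 3)) ×ˢ S).sup fun ip => (sueC x ip.1).factorization ip.2

lemma sueC_pos {S : Finset ℕ} {x : ℕ × ℕ} (hx : x ∈ sueX S) (i : Fin 3) : 0 < sueC x i := by
  obtain ⟨h1, h2, -⟩ := hx
  fin_cases i <;> simp [sueC] <;> omega

lemma sueC_le (x : ℕ × ℕ) (i : Fin 3) : sueC x i ≤ x.1 + x.2 := by
  fin_cases i <;> simp [sueC]

lemma sueC_eq {S : Finset ℕ} {x : ℕ × ℕ} (hx : x ∈ sueX S) (i : Fin 3) :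
    ∏ p ∈ S, p ^ (sueC x i).factorization p = sueC x i := by
  conv_rhs => rw [← Nat.prod_factorization_pow_eq_self (sueC_pos hx i).ne']
  rw [Finsupp.prod_of_support_subset _ (s := S) (hx.2.2.2 i)]
  simp

lemma sueV_le {S : Finset ℕ} (x : ℕ × ℕ) (i : Fin 3) {p : ℕ} (hp : p ∈ S) :
    (sueC x i).factorization p ≤ sueN S x :=
  Finset.le_sup (f := fun ip : Fin 3 × ℕ => (sueC x ip.1).factorization ip.2) (b := (i, p))
    (by simp [hp])

lemma sueN_two_pow {S : Finset ℕ} (hS : ∀ p ∈ S, p.Prime) {x : ℕ × ℕ} (hx : x ∈ sueX S) :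
    2 ^ sueN S x ≤ x.1 + x.2 := by
  have hpos : x.1 + x.2 ≠ 0 := by have := hx.1; omega
  rw [← Nat.le_log_iff_pow_le (by norm_num) hpos]
  refine Finset.sup_le fun ip hip => ?_
  rw [Nat.le_log_iff_pow_le (by norm_num) hpos]
  have hp := hS ip.2 (by simpa using hip)
  calc 2 ^ (sueC x ip.1).factorization ip.2 ≤ ip.2 ^ (sueC x ip.1).factorization ip.2 :=
        Nat.pow_le_pow_left hp.two_le _
    _ ≤ sueC x ip.1 := Nat.ordProj_le _ (sueC_pos hx _).ne'
    _ ≤ _ := sueC_le _ _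

lemma sueC_le_pow {S : Finset ℕ} (hS : ∀ p ∈ S, p.Prime) {x : ℕ × ℕ} (hx : x ∈ sueX S)
    (i : Fin 3) : sueC x i ≤ (∏ p ∈ S, p) ^ sueN S x := by
  rw [← sueC_eq hx i, ← Finset.prod_pow]
  refine Finset.prod_le_prod' fun p hp => ?_
  exact Nat.pow_le_pow_right (hS p hp).pos (sueV_le x i hp)

lemma sue_gap {S : Finset ℕ} (hS : ∀ p ∈ S, p.Prime) {x y : ℕ × ℕ} (hx : x ∈ sueX S)
    (hy : y ∈ sueX S) (N : ℕ) (hN : Odd N) (E : ℕ)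
    (hE : ∀ i, ∀ p ∈ S, |((sueC y i).factorization p : ℤ)
      - (2 * N + 1) * (sueC x i).factorization p| ≤ E) :
    (x.1 + x.2) ^ (N + 1) ≤ 2 ^ (7 * N + 1) * (∏ p ∈ S, p) ^ (2 * E) := by
  set t : Fin 3 → ℕ := fun i => ∏ p ∈ S, p ^ ((sueC y i).factorization p + E
    - (2 * N + 1) * (sueC x i).factorization p) with ht
  have hle : ∀ i, ∀ p ∈ S, (2 * N + 1) * (sueC x i).factorization p
      ≤ (sueC y i).factorization p + E := by
    intro i p hp
    have := (abs_le.mp (hE i p hp)).1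
    zify; linarith
  have hle' : ∀ i, ∀ p ∈ S, (sueC y i).factorization p + E
      ≤ (2 * N + 1) * (sueC x i).factorization p + 2 * E := by
    intro i p hp
    have := (abs_le.mp (hE i p hp)).2
    zify; linarith
  have hmul : ∀ i, t i * sueC x i ^ (2 * N + 1) = (∏ p ∈ S, p) ^ E * sueC y i := by
    intro i
    conv_lhs => rw [← sueC_eq hx i]
    conv_rhs => rw [← sueC_eq hy i]
    rw [← Finset.prod_pow, ← Finset.prod_pow, ← Finset.prod_mul_distrib,
      ← Finset.prod_mul_distrib]
    refine Finset.prod_congr rfl fun p hp => ?_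
    rw [← pow_mul, ← pow_add, ← pow_add]
    congr 1
    have := hle i p hp
    rw [mul_comm ((sueC x i).factorization p)]
    omega
  have hpos : ∀ i, 0 < t i := fun i => Finset.prod_pos fun p hp => pow_pos (hS p hp).pos _
  have hT : ∀ i, t i ≤ (∏ p ∈ S, p) ^ (2 * E) := by
    intro i
    rw [← Finset.prod_pow]
    refine Finset.prod_le_prod' fun p hp => Nat.pow_le_pow_right (hS p hp).pos ?_
    have := hle' i p hp
    omega
  have h0 := hmul 0
  have h1 := hmul 1
  have h2 := hmul 2
  simp [sueC] at h0 h1 h2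
  refine sue_key N hN x.1 x.2 (x.1 + x.2) (t 0) (t 1) (t 2) _ hx.1 hx.2.1 rfl hx.2.2.1
    (hpos 0) (hpos 1) (hT 0) (hT 1) ?_
  rw [h0, h1, h2]; ring

lemma sue_cell {v w n m Q : ℕ} (hn : 0 < n) (hm : 0 < m) (h : v * Q / n = w * Q / m) :
    |(w : ℤ) * n - v * m| * Q ≤ n * m := by
  have a1 := Nat.div_mul_le_self (v * Q) n
  have a2 := Nat.lt_div_mul_add (a := v * Q) hn
  have b1 := Nat.div_mul_le_self (w * Q) m
  have b2 := Nat.lt_div_mul_add (a := w * Q) hm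
  rw [← h] at b1 b2
  set q := v * Q / n
  zify at a1 a2 b1 b2 hn hm
  have hQ : |(Q:ℤ)| = Q := abs_of_nonneg (by positivity)
  rw [← hQ, ← abs_mul, abs_le]
  constructor <;> nlinarith

lemma sue_pair {S : Finset ℕ} (hS : ∀ p ∈ S, p.Prime) {x y : ℕ × ℕ} (hx : x ∈ sueX S)
    (hy : y ∈ sueX S) (ρ : ℕ) (hρ : 0 < ρ) (hR : ∏ p ∈ S, p ≤ 2 ^ ρ)
    (hcell : ∀ i, ∀ p ∈ S, (sueC x i).factorization p * (8 * ρ) / sueN S x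
      = (sueC y i).factorization p * (8 * ρ) / sueN S y)
    (hnx : 28 ≤ sueN S x) (hny : 12 * ρ * (4 * sueN S x) ≤ sueN S y) : False := by
  set n := sueN S x with hn
  set m := sueN S y with hm
  have hn0 : 0 < n := by omega
  have hm0 : 0 < m := by
    have : 0 < 12 * ρ * (4 * n) := by positivity
    omega
  set k := m / (4 * n) with hk
  have hk1 : k * (4 * n) ≤ m := Nat.div_mul_le_self _ _
  have hk2 : m < k * (4 * n) + 4 * n := Nat.lt_div_mul_add (by positivity)
  have hk3 : 12 * ρ ≤ k := (Nat.le_div_iff_mul_le (by positivity)).mpr hny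
  set N := 2 * k + 1 with hNdef
  set Q := 8 * ρ with hQ
  have hQ0 : 0 < Q := by positivity
  set E := ((2 * N + 2 + 3 * Q) * n) / Q with hEdef
  have hEQ : E * Q ≤ (2 * N + 2 + 3 * Q) * n := Nat.div_mul_le_self _ _
  have hgap := sue_gap hS hx hy N ⟨k, rfl⟩ E (by
    intro i p hp
    have hc := sue_cell hn0 hm0 (hcell i p hp)
    have hv := sueV_le x i hp
    rw [← hn] at hv
    set v := (sueC x i).factorization p
    set w := (sueC y i).factorization p
    have e1 : (w:ℤ) - (2 * N + 1) * v = w - (2 * N + 1) * v := rfl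
    have e2 : |(m:ℤ) - (2 * N + 1) * n| ≤ 3 * n := by
      rw [hNdef]
      zify at hk1 hk2
      push_cast
      rw [abs_le]; constructor <;> nlinarith
    have e3 : |(w:ℤ) - (2 * N + 1) * v| * n ≤ |(w:ℤ) * n - v * m| + v * |(m:ℤ) - (2 * N + 1) * n| := by
      have hna : |(n:ℤ)| = n := abs_of_nonneg (by positivity)
      have hva : |(v:ℤ)| = v := abs_of_nonneg (by positivity)
      calc _ = |((w:ℤ) * n - v * m) + v * ((m:ℤ) - (2 * N + 1) * n)| := by
            rw [← hna, ← abs_mul, hna]; congr 1; ring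
        _ ≤ _ := by
            refine (abs_add_le _ _).trans ?_
            rw [abs_mul (v:ℤ), hva]
    have e4 : |(w:ℤ) - (2 * N + 1) * v| * Q ≤ (2 * N + 2 + 3 * Q) * n := by
      have hnz : (0:ℤ) < n := by exact_mod_cast hn0
      refine le_of_mul_le_mul_right ?_ hnz
      have f1 : (v:ℤ) * |(m:ℤ) - (2 * N + 1) * n| ≤ n * (3 * n) := by
        have : (v:ℤ) ≤ n := by exact_mod_cast hv
        gcongr
      have f2 : (m:ℤ) ≤ (2 * N + 2) * n := by
        rw [hNdef]; zify at hk2; push_cast; nlinarith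
      have hQz : (0:ℤ) < Q := by exact_mod_cast hQ0
      calc |(w:ℤ) - (2 * N + 1) * v| * Q * n = (|(w:ℤ) - (2 * N + 1) * v| * n) * Q := by ring
        _ ≤ (|(w:ℤ) * n - v * m| + n * (3 * n)) * Q := by gcongr; linarith
        _ = |(w:ℤ) * n - v * m| * Q + n * (3 * n) * Q := by ring
        _ ≤ n * m + n * (3 * n) * Q := by gcongr
        _ ≤ n * ((2 * N + 2) * n) + n * (3 * n) * Q := by gcongr
        _ = _ := by ring
    have e5 : (|(w:ℤ) - (2 * N + 1) * v|).natAbs ≤ E := by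
      rw [hEdef, Nat.le_div_iff_mul_le hQ0]
      zify
      rw [abs_abs]
      exact e4
    zify at e5
    rwa [abs_abs] at e5)
  have h2 := sueN_two_pow hS hx
  rw [← hn] at h2
  have h3 : 2 ^ (n * (N + 1)) ≤ 2 ^ (7 * N + 1 + ρ * (2 * E)) := by
    calc 2 ^ (n * (N + 1)) = (2 ^ n) ^ (N + 1) := by rw [pow_mul]
      _ ≤ (x.1 + x.2) ^ (N + 1) := by gcongr
      _ ≤ _ := hgap
      _ ≤ 2 ^ (7 * N + 1) * (2 ^ ρ) ^ (2 * E) := by gcongr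
      _ = _ := by rw [← pow_mul, ← pow_add]
  have h4 := (Nat.pow_le_pow_iff_right (by norm_num)).mp h3
  have h5 : 4 * (n * (N + 1)) ≤ 28 * N + 4 + (2 * N + 2 + 24 * ρ) * n := by
    have : E * Q = 4 * (ρ * (2 * E)) := by rw [hQ]; ring
    have : (2 * N + 2 + 3 * Q) * n = (2 * N + 2 + 24 * ρ) * n := by rw [hQ]; ring
    omega
  have h6 : 28 * N + 4 ≤ n * (N + 1) := by nlinarith
  have h7 : n * (N + 1) ≤ 24 * ρ * n := by nlinarith
  have h8 : N + 1 ≤ 24 * ρ := by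
    rw [mul_comm n] at h7
    exact le_of_mul_le_mul_right h7 hn0
  omega

lemma sueX_finite (S : Finset ℕ) (hS : ∀ p ∈ S, p.Prime) : (sueX S).Finite := by
  by_contra hinf
  have hinf' : (sueX S).Infinite := hinf
  obtain ⟨ρ, hρ, hR⟩ : ∃ ρ : ℕ, 0 < ρ ∧ ∏ p ∈ S, p ≤ 2 ^ ρ :=
    ⟨∏ p ∈ S, p, Finset.prod_pos fun p hp => (hS p hp).pos, Nat.lt_two_pow_self.le⟩
  have hsmall : ∀ K, {x | x ∈ sueX S ∧ sueN S x < K}.Finite := by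
    intro K
    refine (Set.finite_Iic (((∏ p ∈ S, p) ^ K, (∏ p ∈ S, p) ^ K) : ℕ × ℕ)).subset ?_
    rintro x ⟨hx, hK⟩
    have hR1 : 0 < ∏ p ∈ S, p := Finset.prod_pos fun p hp => (hS p hp).pos
    have hb : ∀ i, sueC x i ≤ (∏ p ∈ S, p) ^ K := fun i =>
      (sueC_le_pow hS hx i).trans (Nat.pow_le_pow_right hR1 hK.le)
    exact ⟨by simpa [sueC] using hb 0, by simpa [sueC] using hb 1⟩
  have : Infinite (sueX S) := hinf'.to_subtype
  let f : sueX S → (Fin 3 → S → Fin (8 * ρ + 1)) := fun x i p =>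
    ⟨(sueC x.1 i).factorization p * (8 * ρ) / sueN S x.1, by
      have := sueV_le x.1 i p.2
      refine Nat.lt_succ_of_le (Nat.div_le_of_le_mul ?_)
      gcongr⟩
  obtain ⟨z, hz⟩ := Finite.exists_infinite_fiber f
  have hbig : ∀ K, ∃ x : sueX S, f x = z ∧ K ≤ sueN S x.1 := by
    intro K
    by_contra! hcon
    have hz' : (f ⁻¹' {z}).Infinite := Set.infinite_coe_iff.mp hz
    apply hz'
    refine ((hsmall K).preimage (f := Subtype.val) Subtype.val_injective.injOn).subset ?_
    intro x hx
    exact ⟨x.2, hcon x hx⟩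
  obtain ⟨x, hx, hnx⟩ := hbig 28
  obtain ⟨y, hy, hny⟩ := hbig (12 * ρ * (4 * sueN S x.1))
  refine sue_pair hS x.2 y.2 ρ hρ hR ?_ hnx hny
  intro i p hp
  have := congrFun (congrFun (hx.trans hy.symm) i) ⟨p, hp⟩
  simpa [f] using this

lemma sue_val {p m d : ℕ} (hp : p.Prime) (hm : 0 < m) (hd : 0 < d) (hc : Nat.Coprime m d)
    (h : padicValRat p ((m : ℚ) / d) = 0) : ¬ p ∣ m ∧ ¬ p ∣ d := by
  haveI := Fact.mk hp
  rw [padicValRat.div (by positivity) (by positivity), padicValRat.of_nat, padicValRat.of_nat] at h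
  have h' : padicValNat p m = padicValNat p d := by omega
  have hiff : p ∣ m ↔ p ∣ d := by
    rw [dvd_iff_padicValNat_ne_zero hm.ne', dvd_iff_padicValNat_ne_zero hd.ne', h']
  have : ¬ (p ∣ m ∧ p ∣ d) := fun ⟨h1, h2⟩ => Nat.not_coprime_of_dvd_of_dvd hp.one_lt h1 h2 hc
  tauto

/-- The `S`-unit predicate. -/
def SueUnit (S : Finset ℕ) (u : ℚ) : Prop :=
  u ≠ 0 ∧ ∀ p : ℕ, p.Prime → p ∉ S → padicValRat p u = 0

lemma SueUnit.div {S : Finset ℕ} {u v : ℚ} (hu : SueUnit S u) (hv : SueUnit S v) :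
    SueUnit S (u / v) := by
  refine ⟨div_ne_zero hu.1 hv.1, fun p hp hpS => ?_⟩
  haveI := Fact.mk hp
  rw [padicValRat.div hu.1 hv.1, hu.2 p hp hpS, hv.2 p hp hpS, sub_zero]

lemma SueUnit.neg {S : Finset ℕ} {u : ℚ} (hu : SueUnit S u) : SueUnit S (-u) :=
  ⟨neg_ne_zero.mpr hu.1, fun p hp hpS => by rw [padicValRat.neg, hu.2 p hp hpS]⟩

lemma SueUnit.one {S : Finset ℕ} : SueUnit S 1 := ⟨one_ne_zero, fun p _ _ => by simp⟩

lemma sue_pos_finite (S : Finset ℕ) (hS : ∀ p ∈ S, p.Prime) :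
    {uv : ℚ × ℚ | (0 < uv.1 ∧ 0 < uv.2) ∧ SueUnit S uv.1 ∧ SueUnit S uv.2 ∧
      uv.1 + uv.2 = 1}.Finite := by
  refine ((sueX_finite S hS).image fun x : ℕ × ℕ =>
    (((x.1 : ℚ) / ((x.1 + x.2 : ℕ) : ℚ), (x.2 : ℚ) / ((x.1 + x.2 : ℕ) : ℚ)) : ℚ × ℚ)).subset ?_
  rintro ⟨u, v⟩ ⟨⟨hu0, hv0⟩, hu, hv, huv⟩
  simp only at hu0 hv0 hu hv huv
  obtain ⟨a, ha⟩ := Int.eq_ofNat_of_zero_le (Rat.num_pos.mpr hu0).le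
  have hd : 0 < u.den := u.den_pos
  have hdq : (0:ℚ) < u.den := by exact_mod_cast hd
  have hue : u = (a : ℚ) / (u.den : ℚ) := by
    conv_lhs => rw [← Rat.num_div_den u, ha]
    simp
  have hapos : 0 < a := by have := Rat.num_pos.mpr hu0; omega
  have hcop : Nat.Coprime a u.den := by have := u.reduced; rwa [ha] at this
  have hlt : a < u.den := by
    have : u < 1 := by linarith
    rw [hue, div_lt_one hdq] at this
    exact_mod_cast this
  obtain ⟨b, hb⟩ := Nat.exists_eq_add_of_lt hlt
  generalize u.den = d at *
  obtain ⟨b', rfl⟩ : ∃ b', b' = b + 1 := ⟨_, rfl⟩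
  have hdb : d = a + (b + 1) := by omega
  have hve : v = ((b + 1 : ℕ) : ℚ) / (d : ℚ) := by
    have : v = 1 - u := by linarith
    rw [this, hue, hdb]; push_cast; field_simp; ring
  have hcop' : Nat.Coprime (b + 1) d := by
    rw [hdb] at hcop ⊢
    simp at hcop ⊢
    exact hcop.symm
  refine ⟨(a, b + 1), ⟨hapos, Nat.succ_pos _, by simpa [← hdb] using hcop, ?_⟩, ?_⟩
  · intro i p hp
    by_contra hpS
    have hpp := Nat.prime_of_mem_primeFactors hp
    have hpd := Nat.dvd_of_mem_primeFactors hp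
    have h1 := sue_val hpp hapos hd hcop (by rw [← hue]; exact hu.2 p hpp hpS)
    have h2 := sue_val hpp (Nat.succ_pos _) hd hcop' (by rw [← hve]; exact hv.2 p hpp hpS)
    fin_cases i
    · exact h1.1 hpd
    · exact h2.1 hpd
    · simp only [sueC] at hpd
      apply h1.2
      rw [hdb]; exact hpd
  · simp only [← hdb, ← hue, ← hve]

/-- Siegel's theorem on the unit equation (reproved in the paper following Kim): for a
finite set `S` of primes, the set of pairs `(u, v)` of `S`-units of `ℚ` with
`u + v = 1` is finite.  Here a nonzero rational `u` is an `S`-unit when its `p`-adic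
valuation vanishes for every prime `p ∉ S`. -/
theorem unit_equation_finite (S : Finset ℕ) (hS : ∀ p ∈ S, p.Prime) :
    {uv : ℚ × ℚ |
      (uv.1 ≠ 0 ∧ ∀ p : ℕ, p.Prime → p ∉ S → padicValRat p uv.1 = 0) ∧
      (uv.2 ≠ 0 ∧ ∀ p : ℕ, p.Prime → p ∉ S → padicValRat p uv.2 = 0) ∧
      uv.1 + uv.2 = 1}.Finite := by
  have hP := sue_pos_finite S hS
  refine (hP.union ((hP.image fun st : ℚ × ℚ => ((-(st.2 / st.1), 1 / st.1) : ℚ × ℚ)).union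
    (hP.image fun st : ℚ × ℚ => ((1 / st.1, -(st.2 / st.1)) : ℚ × ℚ)))).subset ?_
  rintro ⟨u, v⟩ ⟨hu, hv, huv⟩
  simp only at hu hv huv
  have hu' : SueUnit S u := hu
  have hv' : SueUnit S v := hv
  rcases lt_or_gt_of_ne hu.1 with hu0 | hu0
  · right; left
    have hv0 : 0 < v := by linarith
    refine ⟨(1 / v, -u / v), ⟨⟨by positivity, div_pos (by linarith) hv0⟩,
      SueUnit.one.div hv', hu'.neg.div hv', ?_⟩, ?_⟩
    · simp only; field_simp; linarith
    · ext <;> simp <;> field_simp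
  · rcases lt_or_gt_of_ne hv.1 with hv0 | hv0
    · right; right
      refine ⟨(1 / u, -v / u), ⟨⟨by positivity, div_pos (by linarith) hu0⟩,
        SueUnit.one.div hu', hv'.neg.div hu', ?_⟩, ?_⟩
      · simp only; field_simp; linarith
      · ext <;> simp <;> field_simp
    · left
      exact ⟨⟨hu0, hv0⟩, hu', hv', huv⟩
end
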